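/- Fix n ≥ 2. For every ε > 0 there exists δ ∈ (0,1/4) such that the following holds: if μ is a Borel measure on ℝⁿ and there exist M₁,…,M_n > 0 and Borel probability measures ℙ₁,…,ℙ_n on Γ(ℝⁿ), each ℙ_j concentrated on the set Γ_j(δ) of C(e_j, 1−δ)-curves with respect to the identity, such that μ ≤ M_j · ν(ℙ_j) for all 1 ≤ j ≤ n, then for all m ≥ 0, ∑_{Q ∈ 𝒟_m} (μ(Q)/|Q|)^{n/(n−1)} |Q| ≤ K(n,ε) · 2^{mε} · ∏_{j=1}^n M_j^{1/(n−1)}, where K(n,ε) is a constant depending only on n and ε. -/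

import Mathlib

/-!
Following Guth's multiscale argument, cut a grid cube of side `1 / N` into `Rⁿ` cubes of side
`1 / (N * R)`. If `δ` is small in terms of `R`, a `C(e_j, 1 - δ)`-curve is, inside the large cube,
so close to a line in direction `e_j` that it meets at most `3 ^ (n - 1)` of the `R ^ (n - 1)` tubes
of small cubes in that direction. Grouping the small cubes into tubes, the Loomis–Whitney
inequality bounds the Kakeya functional at scale `1 / (N * R)` by `3 ^ n` times the one at scale
`1 / N`, a loss that does not depend on `R`. Over the `m / r` steps needed to reach scale `2 ^ (-m)`
with `R = 2 ^ r`, the total loss is `3 ^ (n * m / r)`, hence at most `2 ^ (m * ε)` for `r` large.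
Finally, biLipschitz fragments have length at most `2 * diam Q` in a cube `Q`, so that the Kakeya
functional dominates the sum over dyadic cubes.
-/

open MeasureTheory Metric Set Filter Topology ENNReal NNReal
open scoped RealInnerProductSpace

noncomputable section

namespace BKO

/-- `ℝⁿ` with the Euclidean metric. -/
abbrev E (n : ℕ) : Type := EuclideanSpace ℝ (Fin n)

variable {X : Type*} [MetricSpace X]

/-- A set `G ⊆ ℝ × X` is the graph of a curve fragment if all first coordinates lie
in `[0,1]` and it is the graph of a `2`-biLipschitz function defined on a subset of `[0,1]`. -/
def IsFragmentGraph (X : Type*) [MetricSpace X] (G : Set (ℝ × X)) : Prop :=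
  (∀ p ∈ G, p.1 ∈ Set.Icc (0:ℝ) 1) ∧
  ∀ p ∈ G, ∀ q ∈ G, |p.1 - q.1| ≤ 2 * dist p.2 q.2 ∧ dist p.2 q.2 ≤ 2 * |p.1 - q.1|

/-- The space `Γ(X)` of curve fragments, identified with their graphs (nonempty compact
subsets of `[0,1] × X`), with the Hausdorff metric `d_Γ(γ₁,γ₂) = d_H(gr γ₁, gr γ₂)`. -/
def Fragment (X : Type*) [MetricSpace X] : Type _ :=
  {G : TopologicalSpace.NonemptyCompacts (ℝ × X) // IsFragmentGraph X (G : Set (ℝ × X))}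

instance : MetricSpace (Fragment X) :=
  inferInstanceAs (MetricSpace {G : TopologicalSpace.NonemptyCompacts (ℝ × X) // _})

instance : MeasurableSpace (Fragment X) := borel _
instance : BorelSpace (Fragment X) := ⟨rfl⟩

namespace Fragment

/-- The graph of a curve fragment. -/
def graph (γ : Fragment X) : Set (ℝ × X) := (γ.1 : Set (ℝ × X))

/-- The (compact) domain of a curve fragment. -/
def dom (γ : Fragment X) : Set ℝ := Prod.fst '' γ.graph

/-- The image of a curve fragment. -/
def im (γ : Fragment X) : Set X := Prod.snd '' γ.graph

/-- The function `dom γ → X` determined by the graph (junk value off the domain). -/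
def fn (γ : Fragment X) (t : ℝ) : X :=
  @dite X (∃ x, (t, x) ∈ γ.graph) (Classical.dec _)
    (fun h => h.choose) (fun _ => γ.1.nonempty.choose.2)

/-- `γ_* 𝓛¹`: the pushforward under `γ` of Lebesgue measure restricted to `dom γ`. -/
def measure [MeasurableSpace X] (γ : Fragment X) : Measure X :=
  (volume.restrict γ.dom).map γ.fn

end Fragment

/-- The measure `ν(ℙ)`, `ν(ℙ)(B) = ∫ γ_*𝓛¹(B) dℙ(γ)`. -/
def nu [MeasurableSpace X] (ℙ : Measure (Fragment X)) : Measure X :=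
  ℙ.bind Fragment.measure

/-- The cone `C(w,θ) = {v : |⟨v,w⟩| ≥ θ‖v‖}`. -/
def cone {n : ℕ} (w : E n) (θ : ℝ) : Set (E n) := {v | θ * ‖v‖ ≤ |⟪v, w⟫|}

/-- A cone in `ℝⁿ` is a set of the form `C(w,θ)` with `w ∈ Sⁿ⁻¹`, `θ ∈ (0,1)`. -/
def IsCone {n : ℕ} (C : Set (E n)) : Prop :=
  ∃ (w : E n) (θ : ℝ), ‖w‖ = 1 ∧ θ ∈ Set.Ioo (0:ℝ) 1 ∧ C = cone w θ

/-- `γ` is a `C`-curve with respect to `φ`. -/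
def IsConeCurve {n : ℕ} (φ : X → E n) (C : Set (E n)) (γ : Fragment X) : Prop :=
  ∃ δ > (0:ℝ), ∀ p ∈ γ.graph, ∀ q ∈ γ.graph,
    φ p.2 - φ q.2 ∈ C \ Metric.ball 0 (δ * |p.1 - q.1|)

/-- `ℙ` is a `C`-Alberti representation of `μ` with respect to `φ`. -/
def IsConeAlbertiRep [MeasurableSpace X] {n : ℕ} (μ : Measure X) (φ : X → E n)
    (C : Set (E n)) (ℙ : Measure (Fragment X)) : Prop :=
  IsProbabilityMeasure ℙ ∧ μ ≪ nu ℙ ∧ ∀ᵐ γ ∂ℙ, IsConeCurve φ C γ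

/-- `S` is `C`-null with respect to `φ`: every `C`-curve meets `S` in `𝓗¹`-measure zero. -/
def ConeNull [MeasurableSpace X] [BorelSpace X] {n : ℕ} (φ : X → E n) (C : Set (E n))
    (S : Set X) : Prop :=
  ∀ γ : Fragment X, IsConeCurve φ C γ → μH[1] (γ.im ∩ S) = 0

/-- Cones `C₁,…,C_m` are independent. -/
def IndepCones {n m : ℕ} (C : Fin m → Set (E n)) : Prop :=
  ∀ v : Fin m → E n, (∀ i, v i ∈ C i ∧ v i ≠ 0) → LinearIndependent ℝ v

/-- `μ` has `n` independent Alberti representations. -/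
def HasIndepAlberti [MeasurableSpace X] (μ : Measure X) (n : ℕ) : Prop :=
  ∃ φ : X → E n, (∃ K, LipschitzWith K φ) ∧ ∃ C : Fin n → Set (E n),
    (∀ i, IsCone (C i)) ∧ IndepCones C ∧ ∀ i, ∃ ℙ, IsConeAlbertiRep μ φ (C i) ℙ

/-- The collection `𝒮(φ)` of singular sets. -/
def MemScal [MeasurableSpace X] [BorelSpace X] {n : ℕ} (φ : X → E n) (S : Set X) : Prop :=
  MeasurableSet S ∧ ∀ θ ∈ Set.Ioo (0:ℝ) 1, ∃ (m : ℕ) (S' : Fin m → Set X) (w : Fin m → E n),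
    S = (⋃ i, S' i) ∧ ∀ i, MeasurableSet (S' i) ∧ ‖w i‖ = 1 ∧ ConeNull φ (cone (w i) θ) (S' i)

/-- `Lip(f,x) = limsup_{r→0⁺} sup_{d(x,y)≤r} |f(y)-f(x)|/r`. -/
def lipAt (f : X → ℝ) (x : X) : ℝ :=
  Filter.limsup (fun r : ℝ => sSup ((fun y => |f y - f x| / r) '' Metric.closedBall x r))
    (𝓝[>] (0:ℝ))

/-- `ind φ = {x : Lip(D⬝φ, x) > 0 for all D ∈ Sⁿ⁻¹}`. -/
def indSet {n : ℕ} (φ : X → E n) : Set X :=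
  {x | ∀ D : E n, ‖D‖ = 1 → 0 < lipAt (fun y => ⟪φ y, D⟫) x}

/-- `f` is differentiable with respect to `φ` at `x₀`, with a unique derivative. -/
def DiffWrtAt {n : ℕ} (φ : X → E n) (f : X → ℝ) (x₀ : X) : Prop :=
  ∃! L : E n →ₗ[ℝ] ℝ,
    Filter.Tendsto (fun x => |f x - f x₀ - L (φ x - φ x₀)| / dist x x₀) (𝓝[≠] x₀) (𝓝 0)

/-- `(X,d,μ)` is a Lipschitz differentiability space, with all chart dimensions
satisfying the predicate `P`. -/
def IsLipDiffSpaceWith [MeasurableSpace X] (μ : Measure X) (P : ℕ → Prop) : Prop :=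
  ∃ (N : ℕ → ℕ) (U : ℕ → Set X) (φ : (i : ℕ) → X → E (N i)),
    (∀ i, P (N i)) ∧ (∀ i, MeasurableSet (U i)) ∧ (⋃ i, U i) = Set.univ ∧
    (∀ i, ∃ K, LipschitzWith K (φ i)) ∧
    ∀ f : X → ℝ, (∃ K, LipschitzWith K f) →
      ∀ i, ∀ᵐ x ∂μ, x ∈ U i → DiffWrtAt (φ i) f x

/-- `ρ` is an upper gradient of `f`. -/
def IsUpperGradient (f ρ : X → ℝ) : Prop :=
  ∀ γ : ℝ → X, LipschitzOnWith 1 γ (Set.Icc 0 1) →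
    |f (γ 1) - f (γ 0)| ≤ ∫ t in Set.Icc (0:ℝ) 1, ρ (γ t)

/-- `ρ` is a `*`-upper gradient of `f`. -/
def IsStarUpperGradient (f ρ : X → ℝ) : Prop :=
  ∀ γ : Fragment X, LipschitzOnWith 1 γ.fn γ.dom →
    ∀ᵐ t ∂(volume.restrict γ.dom),
      ∀ v : ℝ, HasDerivWithinAt (f ∘ γ.fn) v γ.dom t → |v| ≤ ρ (γ.fn t)

/-- The dyadic cube of side length `2^{-m}` in `[0,1)ⁿ` indexed by `k`. -/
def dyadicCube (n m : ℕ) (k : Fin n → Fin (2 ^ m)) : Set (E n) :=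
  {x | ∀ i, (k i : ℝ) / 2 ^ m ≤ x i ∧ x i < ((k i : ℝ) + 1) / 2 ^ m}

section Finner

variable {ι κ : Type*} [Fintype κ] {p : κ → ℝ}

lemma lintegral_prod_rpow_le_of_eq_const {α : Type*} [MeasurableSpace α] {ν : Measure α}
    (hp : ∀ j, 0 ≤ p j) {t : Finset κ} (hpt : ∑ j ∈ t, p j = 1) {g : κ → α → ℝ≥0∞}
    (hg : ∀ j, Measurable (g j)) {c : κ → ℝ≥0∞} (hgt : ∀ j ∈ t, ∫⁻ a, g j a ∂ν = c j)
    (hgc : ∀ j ∉ t, ∀ a, g j a = c j) :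
    ∫⁻ a, ∏ j, g j a ^ p j ∂ν ≤ ∏ j, c j ^ p j := by
  classical
  calc ∫⁻ a, ∏ j, g j a ^ p j ∂ν
      = (∫⁻ a, ∏ j ∈ t, g j a ^ p j ∂ν) * ∏ j ∈ tᶜ, c j ^ p j := by
        rw [← lintegral_mul_const _ (by fun_prop)]
        refine lintegral_congr fun a => ?_
        rw [← Finset.prod_mul_prod_compl t]
        congr 1
        exact Finset.prod_congr rfl fun j hj => by rw [hgc j (Finset.mem_compl.1 hj)]
    _ ≤ (∏ j ∈ t, (∫⁻ a, g j a ∂ν) ^ p j) * ∏ j ∈ tᶜ, c j ^ p j := by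
        gcongr
        exact ENNReal.lintegral_prod_norm_pow_le t (fun j _ => (hg j).aemeasurable) hpt
          fun j _ => hp j
    _ = ∏ j, c j ^ p j := by
        rw [← Finset.prod_mul_prod_compl t]
        congr 1
        exact Finset.prod_congr rfl fun j hj => by rw [hgt j hj]

variable [DecidableEq ι] {A : ι → Type*} [∀ i, MeasurableSpace (A i)] {μ : ∀ i, Measure (A i)}

lemma lmarginal_comp_restrict (s : Finset ι) (F : (∀ i : s, A i) → ℝ≥0∞) (x : ∀ i, A i) :
    (∫⋯∫⁻_s, F ∘ s.restrict ∂μ) x = ∫⁻ y, F y ∂Measure.pi fun i : s => μ i :=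
  lintegral_congr fun y => congrArg F (Function.restrict_updateFinset x y)

variable [∀ i, SigmaFinite (μ i)]

lemma lmarginal_inter_update_of_dependsOn {f : (∀ i, A i) → ℝ≥0∞} (hf : Measurable f)
    {T : Finset ι} (hfT : DependsOn f T) {i : ι} (hi : i ∉ T) (s : Finset ι) (x : ∀ i, A i)
    (a : A i) :
    (∫⋯∫⁻_s ∩ T, f ∂μ) (Function.update x i a) = (∫⋯∫⁻_s ∩ T, f ∂μ) x := by
  rw [lmarginal_update_of_notMem hf fun h => hi (Finset.mem_of_mem_inter_right h)]
  congr 1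
  exact funext fun y => hfT fun k hk => Function.update_of_ne (ne_of_mem_of_not_mem hk hi) a y

variable {S : κ → Finset ι}

theorem lmarginal_prod_rpow_le (hp : ∀ j, 0 ≤ p j) (hpS : ∀ i, ∑ j with i ∈ S j, p j = 1)
    {f : κ → (∀ i, A i) → ℝ≥0∞} (hf : ∀ j, Measurable (f j))
    (hfS : ∀ j, DependsOn (f j) (S j)) (s : Finset ι) :
    ∫⋯∫⁻_s, (fun x => ∏ j, f j x ^ p j) ∂μ ≤
      fun x => ∏ j, (∫⋯∫⁻_s ∩ S j, f j ∂μ) x ^ p j := by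
  induction s using Finset.induction_on with
  | empty => simp
  | insert i s hi ih =>
    intro x
    rw [lmarginal_insert _ (by fun_prop) hi]
    refine (lintegral_mono fun a => ih (Function.update x i a)).trans <|
      lintegral_prod_rpow_le_of_eq_const hp (hpS i)
        (fun j => ((hf j).lmarginal μ).comp (measurable_update x)) (fun j hj => ?_)
        fun j hj a => ?_
    · rw [Finset.insert_inter_of_mem (by simpa using hj),
        lmarginal_insert _ (hf j) fun h => hi (Finset.mem_of_mem_inter_left h)]
      rfl
    · have hij : i ∉ S j := by simpa using hj
      rw [Finset.insert_inter_of_notMem hij]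
      exact lmarginal_inter_update_of_dependsOn (hf j) (hfS j) hij s x a

variable [Fintype ι]

/-- **Finner's inequality**; the Loomis–Whitney inequality is the case `S j = {j}ᶜ`. -/
theorem lintegral_prod_rpow_le_prod_lintegral_rpow (hp : ∀ j, 0 ≤ p j)
    (hpS : ∀ i, ∑ j with i ∈ S j, p j = 1)
    {F : ∀ j, (∀ i : S j, A i) → ℝ≥0∞} (hF : ∀ j, Measurable (F j)) :
    ∫⁻ x, ∏ j, F j ((S j).restrict x) ^ p j ∂Measure.pi μ ≤
      ∏ j, (∫⁻ y, F j y ∂Measure.pi fun i : S j => μ i) ^ p j := by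
  rcases isEmpty_or_nonempty (∀ i, A i) with h | ⟨⟨x⟩⟩
  · simp
  · have h := lmarginal_prod_rpow_le (μ := μ) hp hpS
      (fun j => (hF j).comp (Finset.measurable_restrict (S j)))
      (fun j _ _ hxy => congrArg (F j) (Finset.dependsOn_restrict (S j) hxy)) Finset.univ x
    simpa [lmarginal_comp_restrict] using h

theorem sum_prod_rpow_le_prod_sum_rpow {A : ι → Type*} [∀ i, Fintype (A i)]
    (hp : ∀ j, 0 ≤ p j) (hpS : ∀ i, ∑ j with i ∈ S j, p j = 1)
    (F : ∀ j, (∀ i : S j, A i) → ℝ≥0∞) :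
    ∑ x : ∀ i, A i, ∏ j, F j ((S j).restrict x) ^ p j ≤ ∏ j, (∑ y, F j y) ^ p j := by
  let _ : ∀ i, MeasurableSpace (A i) := fun _ => ⊤
  simpa [lintegral_fintype] using
    lintegral_prod_rpow_le_prod_lintegral_rpow (μ := fun _ => Measure.count) hp hpS
      (F := F) fun _ => .of_discrete

end Finner

lemma sum_measure_le_mul_measure {α ι : Type*} [MeasurableSpace α] [Fintype ι] {μ : Measure α}
    {s : ι → Set α} {t : Set α} {K : ℕ} (hs : ∀ i, MeasurableSet (s i)) (hst : ∀ i, s i ⊆ t)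
    (hK : ∀ᵐ x ∂μ, {i | x ∈ s i}.ncard ≤ K) : ∑ i, μ (s i) ≤ K * μ t := by
  classical
  calc ∑ i, μ (s i) = ∑ i, ∫⁻ x, (s i).indicator 1 x ∂μ.restrict t := by
        refine Finset.sum_congr rfl fun i _ => ?_
        rw [lintegral_indicator_one (hs i), Measure.restrict_eq_self _ (hst i)]
    _ = ∫⁻ x, ({i | x ∈ s i}.ncard : ℝ≥0∞) ∂μ.restrict t := by
        rw [← lintegral_finsetSum _ fun i _ => measurable_one.indicator (hs i)]
        simp [indicator_apply, Set.ncard_eq_toFinset_card']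
    _ ≤ ∫⁻ _, K ∂μ.restrict t :=
        lintegral_mono_ae <| ae_restrict_of_ae <| hK.mono fun x hx => by exact_mod_cast hx
    _ = K * μ t := by simp

namespace Fragment

/-- The fragments that meet `S`. -/
def hitting (S : Set X) : Set (Fragment X) := {γ | (γ.im ∩ S).Nonempty}

lemma hitting_mono {S T : Set X} (h : S ⊆ T) : hitting S ⊆ hitting T :=
  fun _ hγ => hγ.mono (inter_subset_inter_right _ h)

lemma isClosed_hitting {S : Set X} (hS : IsClosed S) : IsClosed (hitting S) := by
  have : hitting S = {γ : Fragment X | (γ.graph ∩ Prod.snd ⁻¹' S).Nonempty} := by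
    simp only [hitting, im, image_inter_nonempty_iff]
  rw [this]
  exact (TopologicalSpace.NonemptyCompacts.isClosed_inter_nonempty_of_isClosed
    (hS.preimage continuous_snd)).preimage continuous_subtype_val

variable {γ : Fragment X}

lemma isCompact_dom : IsCompact γ.dom :=
  γ.1.isCompact.image continuous_fst

lemma mk_fn_mem_graph {t : ℝ} (ht : t ∈ γ.dom) : (t, γ.fn t) ∈ γ.graph := by
  have h : ∃ x, (t, x) ∈ γ.graph := by simpa [dom] using ht
  rw [fn, dif_pos h]
  exact h.choose_spec

lemma fn_mem_im {t : ℝ} (ht : t ∈ γ.dom) : γ.fn t ∈ γ.im :=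
  ⟨_, mk_fn_mem_graph ht, rfl⟩

lemma lipschitzOnWith_fn : LipschitzOnWith 2 γ.fn γ.dom :=
  LipschitzOnWith.of_dist_le_mul fun _ hs _ ht =>
    (γ.2.2 _ (mk_fn_mem_graph hs) _ (mk_fn_mem_graph ht)).2

lemma edist_le_two_mul_edist_fn {s t : ℝ} (hs : s ∈ γ.dom) (ht : t ∈ γ.dom) :
    edist s t ≤ 2 * edist (γ.fn s) (γ.fn t) := by
  have h := (γ.2.2 _ (mk_fn_mem_graph hs) _ (mk_fn_mem_graph ht)).1
  rw [edist_dist, edist_dist, ← ENNReal.ofReal_ofNat, ← ENNReal.ofReal_mul zero_le_two]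
  exact ENNReal.ofReal_le_ofReal h

variable [MeasurableSpace X] [BorelSpace X] {B : Set X}

lemma measure_apply (hB : MeasurableSet B) :
    γ.measure B = volume (γ.dom ∩ γ.fn ⁻¹' B) := by
  have hdom := γ.isCompact_dom.measurableSet
  rw [measure, Measure.map_apply_of_aemeasurable
    (γ.lipschitzOnWith_fn.continuousOn.aemeasurable hdom) hB, Measure.restrict_apply' hdom,
    inter_comm]

lemma measure_le_two_mul_ediam (hB : MeasurableSet B) : γ.measure B ≤ 2 * ediam B := by
  rw [measure_apply hB]
  refine (Real.volume_le_diam _).trans (ediam_le fun s hs t ht => ?_)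
  exact (edist_le_two_mul_edist_fn hs.1 ht.1).trans <|
    mul_le_mul_right (edist_le_ediam_of_mem (s := B) hs.2 ht.2) 2

lemma measure_eq_zero_of_notMem_hitting (hB : MeasurableSet B) (hγ : γ ∉ hitting B) :
    γ.measure B = 0 := by
  have h : γ.dom ∩ γ.fn ⁻¹' B = ∅ :=
    eq_empty_of_forall_notMem fun _ ht => hγ ⟨_, fn_mem_im ht.1, ht.2⟩
  rw [measure_apply hB, h, measure_empty]

end Fragment

open Fragment

lemma nu_apply_le [MeasurableSpace X] [BorelSpace X] (ℙ : Measure (Fragment X)) {B : Set X}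
    (hB : MeasurableSet B) : nu ℙ B ≤ 2 * ediam B * ℙ (hitting B) :=
  calc nu ℙ B ≤ ∫⁻ γ, γ.measure B ∂ℙ := Measure.bind_apply_le _ hB
    _ ≤ ∫⁻ γ, (hitting B).indicator (fun _ => 2 * ediam B) γ ∂ℙ := by
        refine lintegral_mono fun γ => ?_
        by_cases hγ : γ ∈ hitting B
        · simpa [hγ] using measure_le_two_mul_ediam hB
        · simp [hγ, measure_eq_zero_of_notMem_hitting hB]
    _ ≤ 2 * ediam B * ℙ (hitting B) := lintegral_indicator_const_le _ _

lemma ncard_le_pow_of_forall_le_add {ι : Type*} [Fintype ι] {s : Set (ι → ℕ)} {c : ℕ}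
    (h : ∀ x ∈ s, ∀ y ∈ s, ∀ i, x i ≤ y i + c) : s.ncard ≤ (c + 1) ^ Fintype.card ι := by
  classical
  rcases s.eq_empty_or_nonempty with rfl | hs
  · simp
  · let m : ι → ℕ := fun i => sInf (Function.eval i '' s)
    have hm : s ⊆ Icc m (m + fun _ => c) := by
      refine fun x hx => ⟨fun i => Nat.sInf_le ⟨x, hx, rfl⟩, fun i => ?_⟩
      obtain ⟨y, hy, hyi⟩ := Nat.sInf_mem (hs.image (Function.eval i))
      exact (h x hx y hy i).trans_eq (congrArg (· + c) hyi)
    calc s.ncard ≤ (Icc m (m + fun _ => c)).ncard := ncard_le_ncard hm (finite_Icc _ _)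
      _ = (c + 1) ^ Fintype.card ι := by
        simp [← Finset.coe_Icc, ncard_coe_finset, Pi.card_Icc, add_assoc]

/-- The closed interval of length `1 / N` with left endpoint `k / N`. -/
def gridInterval (N k : ℕ) : Set ℝ := Icc (k / N) ((k + 1) / N)

lemma isClosed_gridInterval (N k : ℕ) : IsClosed (gridInterval N k) := isClosed_Icc

lemma gridInterval_mul_subset {N R a b : ℕ} (hb : b < R) :
    gridInterval (N * R) (b + R * a) ⊆ gridInterval N a := by
  have hR : (R : ℝ) ≠ 0 := by exact_mod_cast (Nat.zero_lt_of_lt hb).ne'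
  have hb' : (b : ℝ) + 1 ≤ R := by exact_mod_cast hb
  rw [gridInterval, gridInterval, ← mul_div_mul_right (a : ℝ) N hR,
    ← mul_div_mul_right ((a : ℝ) + 1) N hR]
  push_cast
  refine Icc_subset_Icc ?_ ?_ <;> gcongr <;> linarith [b.cast_nonneg (α := ℝ)]

lemma abs_sub_le_of_mem_gridInterval {N k : ℕ} {x y : ℝ} (hx : x ∈ gridInterval N k)
    (hy : y ∈ gridInterval N k) : |x - y| ≤ 1 / N :=
  (abs_sub_le_of_le_of_le hx.1 hx.2 hy.1 hy.2).trans_eq (by ring)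

lemma le_add_two_of_mem_gridInterval {N k l : ℕ} (hN : 0 < N) {x y : ℝ}
    (hx : x ∈ gridInterval N k) (hy : y ∈ gridInterval N l) (hxy : |x - y| ≤ 1 / N) :
    k ≤ l + 2 := by
  have hN' : (0 : ℝ) < N := by exact_mod_cast hN
  have h : (k : ℝ) / N ≤ (l + 2) / N :=
    calc (k : ℝ) / N ≤ y + 1 / N := by linarith [hx.1, le_abs_self (x - y)]
      _ ≤ (l + 1) / N + 1 / N := by gcongr; exact hy.2
      _ = (l + 2) / N := by ring
  exact_mod_cast (div_le_div_iff_of_pos_right hN').1 h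

variable {n : ℕ}

/-- The closed cube of side length `1 / N` with corner `k / N`. -/
def closedCube (N : ℕ) (k : Fin n → ℕ) : Set (E n) := {x | ∀ i, x i ∈ gridInterval N (k i)}

/-- The tube in direction `e_j` inside the cube `closedCube N a` made of the cubes of side
`1 / (N * R)` whose position within `closedCube N a` in the directions other than `e_j` is `b`. -/
def tube (N R : ℕ) (a : Fin n → ℕ) (j : Fin n) (b : ({j}ᶜ : Finset (Fin n)) → ℕ) : Set (E n) :=
  closedCube N a ∩ {x | ∀ i, x i ∈ gridInterval (N * R) (b i + R * a i)}

lemma isClosed_closedCube (N : ℕ) (k : Fin n → ℕ) : IsClosed (closedCube N k) := by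
  rw [closedCube, ofPred_forall]
  exact isClosed_iInter fun i => (isClosed_gridInterval N (k i)).preimage (by fun_prop)

lemma isClosed_tube (N R : ℕ) (a : Fin n → ℕ) (j : Fin n)
    (b : ({j}ᶜ : Finset (Fin n)) → ℕ) : IsClosed (tube N R a j b) := by
  rw [tube, ofPred_forall]
  exact (isClosed_closedCube N a).inter <|
    isClosed_iInter fun i => (isClosed_gridInterval _ _).preimage (by fun_prop)

lemma closedCube_mul_subset_tube {N R : ℕ} (a : Fin n → ℕ) (j : Fin n) {b : Fin n → ℕ}
    (hb : ∀ i, b i < R) :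
    closedCube (N * R) (fun i => b i + R * a i) ⊆ tube N R a j fun i => b i :=
  fun _ hx => ⟨fun i => gridInterval_mul_subset (hb i) (hx i), fun i => hx i⟩

lemma ediam_closedCube_le (N : ℕ) (k : Fin n → ℕ) :
    ediam (closedCube N k) ≤ (n : ℝ≥0∞) ^ (1 / 2 : ℝ) * ENNReal.ofReal (1 / N) := by
  have hpre : closedCube N k = WithLp.ofLp ⁻¹' univ.pi fun i => gridInterval N (k i) := by
    ext; simp [closedCube]
  have hpi : ediam (univ.pi fun i => gridInterval N (k i)) ≤ ENNReal.ofReal (1 / N) :=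
    ediam_pi_le_of_le fun i => (Real.ediam_Icc _ _).trans_le (congrArg ENNReal.ofReal (by ring)).le
  rw [hpre]
  refine ((PiLp.antilipschitzWith_ofLp 2 _).ediam_preimage_le _).trans ?_
  gcongr
  simp [ENNReal.coe_rpow_of_nonneg]

/-- Sets that move in the directions other than `e_j` at most `1 / R` times as much as they do
in direction `e_j`. -/
def IsAlmostParallel (R : ℝ) (j : Fin n) (S : Set (E n)) : Prop :=
  ∀ x ∈ S, ∀ y ∈ S, ∀ i ≠ j, R * |x i - y i| ≤ |x j - y j|

lemma IsAlmostParallel.le_add_two_of_inter_tube_nonempty {N R : ℕ} (hN : 0 < N) (hR : 0 < R)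
    {j : Fin n} {S : Set (E n)} (hS : IsAlmostParallel R j S) {a : Fin n → ℕ}
    {b c : ({j}ᶜ : Finset (Fin n)) → ℕ}
    (hb : (S ∩ tube N R a j b).Nonempty) (hc : (S ∩ tube N R a j c).Nonempty)
    (i : ({j}ᶜ : Finset (Fin n))) : b i ≤ c i + 2 := by
  obtain ⟨x, hxS, hxa, hxb⟩ := hb
  obtain ⟨y, hyS, hya, hyc⟩ := hc
  have hi : (i : Fin n) ≠ j := by simpa only [Finset.mem_compl, Finset.mem_singleton] using i.2
  have hR' : (0 : ℝ) < R := by exact_mod_cast hR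
  have hxy : |x i - y i| ≤ 1 / (N * R : ℕ) := by
    rw [Nat.cast_mul, ← div_div, le_div_iff₀' hR']
    exact (hS x hxS y hyS i hi).trans (abs_sub_le_of_mem_gridInterval (hxa j) (hya j))
  have := le_add_two_of_mem_gridInterval (Nat.mul_pos hN hR) (hxb i) (hyc i) hxy
  lia

lemma IsAlmostParallel.ncard_inter_tube_nonempty_le {N R : ℕ} (hN : 0 < N) {j : Fin n}
    {S : Set (E n)} (hS : IsAlmostParallel R j S) (a : Fin n → ℕ) :
    {b : ({j}ᶜ : Finset (Fin n)) → Fin R | (S ∩ tube N R a j fun i => b i).Nonempty}.ncard ≤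
      3 ^ (n - 1) := by
  rw [← ncard_image_of_injective _ (Fin.val_injective.comp_left (α := ({j}ᶜ : Finset (Fin n))))]
  refine (ncard_le_pow_of_forall_le_add (c := 2) ?_).trans_eq (by simp)
  rintro _ ⟨b, hb, rfl⟩ _ ⟨c, hc, rfl⟩ i
  exact hS.le_add_two_of_inter_tube_nonempty hN (Fin.pos (b i)) hb hc i

lemma sum_measure_hitting_tube_le {N R : ℕ} (hN : 0 < N) {j : Fin n} {ℙ : Measure (Fragment (E n))}
    (hℙ : ∀ᵐ γ ∂ℙ, IsAlmostParallel R j γ.im) (a : Fin n → ℕ) :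
    ∑ b : ({j}ᶜ : Finset (Fin n)) → Fin R, ℙ (hitting (tube N R a j fun i => b i)) ≤
      3 ^ (n - 1) * ℙ (hitting (closedCube N a)) := by
  exact_mod_cast sum_measure_le_mul_measure
    (fun _ => (isClosed_hitting (isClosed_tube _ _ _ _ _)).measurableSet)
    (fun _ => hitting_mono inter_subset_left)
    (hℙ.mono fun _ hγ => hγ.ncard_inter_tube_nonempty_le hN a)

/-- The discretised multilinear Kakeya functional: the sum over the grid cubes `Q ⊆ [0,1]ⁿ` of side
length `1 / N` of `∏ⱼ ℙⱼ {γ | γ meets Q} ^ (1 / (n - 1))`. -/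
def kakeyaSum (ℙ : Fin n → Measure (Fragment (E n))) (N : ℕ) : ℝ≥0∞ :=
  ∑ k : Fin n → Fin N, ∏ j, ℙ j (hitting (closedCube N fun i => k i)) ^ (1 / ((n : ℝ) - 1))

variable {ℙ : Fin n → Measure (Fragment (E n))}

lemma sum_compl_singleton_one_div (hn : 2 ≤ n) (i : Fin n) :
    ∑ j with i ∈ ({j}ᶜ : Finset (Fin n)), 1 / ((n : ℝ) - 1) = 1 := by
  have h : Finset.univ.filter (fun j => i ∈ ({j}ᶜ : Finset (Fin n))) = {i}ᶜ := by
    ext; simp [eq_comm]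
  have hn' : (2 : ℝ) ≤ n := by exact_mod_cast hn
  rw [h, Finset.sum_const, Finset.card_compl, Finset.card_singleton, Fintype.card_fin, nsmul_eq_mul,
    Nat.cast_pred (by lia), mul_one_div_cancel (by linarith)]

lemma one_div_sub_one_nonneg (hn : 2 ≤ n) : 0 ≤ 1 / ((n : ℝ) - 1) := by
  have hn' : (2 : ℝ) ≤ n := by exact_mod_cast hn
  exact one_div_nonneg.2 (by linarith)

lemma sum_prod_measure_hitting_subcube_le {N R : ℕ} (hn : 2 ≤ n) (hN : 0 < N)
    (hℙ : ∀ j, ∀ᵐ γ ∂ℙ j, IsAlmostParallel R j γ.im) (a : Fin n → ℕ) :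
    ∑ b : Fin n → Fin R,
        ∏ j, ℙ j (hitting (closedCube (N * R) fun i => b i + R * a i)) ^ (1 / ((n : ℝ) - 1)) ≤
      3 ^ n * ∏ j, ℙ j (hitting (closedCube N a)) ^ (1 / ((n : ℝ) - 1)) := by
  have hp := one_div_sub_one_nonneg hn
  have hpow : ((3 : ℝ≥0∞) ^ (n - 1)) ^ (1 / ((n : ℝ) - 1)) = 3 := by
    rw [one_div, ← Nat.cast_pred (by lia), ENNReal.pow_rpow_inv_natCast (by lia)]
  calc ∑ b : Fin n → Fin R,
        ∏ j, ℙ j (hitting (closedCube (N * R) fun i => b i + R * a i)) ^ (1 / ((n : ℝ) - 1))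
      ≤ ∑ b : Fin n → Fin R,
        ∏ j, ℙ j (hitting (tube N R a j fun i => b i)) ^ (1 / ((n : ℝ) - 1)) := by
        gcongr with b _ j _
        exact hitting_mono (closedCube_mul_subset_tube a j fun i => (b i).2)
    _ ≤ ∏ j, (∑ b : ({j}ᶜ : Finset (Fin n)) → Fin R,
          ℙ j (hitting (tube N R a j fun i => b i))) ^ (1 / ((n : ℝ) - 1)) :=
        sum_prod_rpow_le_prod_sum_rpow (A := fun _ => Fin R) (S := fun j => {j}ᶜ) (fun _ => hp)
          (sum_compl_singleton_one_div hn) fun j b => ℙ j (hitting (tube N R a j fun i => b i))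
    _ ≤ ∏ j, (3 ^ (n - 1) * ℙ j (hitting (closedCube N a))) ^ (1 / ((n : ℝ) - 1)) := by
        gcongr with j _
        exact sum_measure_hitting_tube_le hN (hℙ j) a
    _ = 3 ^ n * ∏ j, ℙ j (hitting (closedCube N a)) ^ (1 / ((n : ℝ) - 1)) := by
        simp only [ENNReal.mul_rpow_of_nonneg _ _ hp, hpow, Finset.prod_mul_distrib,
          Finset.prod_const, Finset.card_fin]

lemma kakeyaSum_mul_le {N R : ℕ} (hn : 2 ≤ n) (hN : 0 < N)
    (hℙ : ∀ j, ∀ᵐ γ ∂ℙ j, IsAlmostParallel R j γ.im) :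
    kakeyaSum ℙ (N * R) ≤ 3 ^ n * kakeyaSum ℙ N := by
  let e : (Fin n → Fin N) × (Fin n → Fin R) ≃ (Fin n → Fin (N * R)) :=
    (Equiv.arrowProdEquivProdArrow _ _ _).symm.trans
      (Equiv.arrowCongr (Equiv.refl _) finProdFinEquiv)
  have he : ∀ a b i, (e (a, b) i : ℕ) = b i + R * a i := fun _ _ _ => rfl
  rw [kakeyaSum, kakeyaSum, ← e.sum_comp, Fintype.sum_prod_type, Finset.mul_sum]
  gcongr with a _
  simp only [he]
  exact sum_prod_measure_hitting_subcube_le hn hN hℙ _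

lemma kakeyaSum_mul_pow_le {N R : ℕ} (hn : 2 ≤ n) (hN : 0 < N) (hR : 0 < R)
    (hℙ : ∀ j, ∀ᵐ γ ∂ℙ j, IsAlmostParallel R j γ.im) (q : ℕ) :
    kakeyaSum ℙ (N * R ^ q) ≤ (3 ^ n) ^ q * kakeyaSum ℙ N := by
  induction q with
  | zero => simp
  | succ q ih =>
    calc kakeyaSum ℙ (N * R ^ (q + 1)) = kakeyaSum ℙ (N * R ^ q * R) := by rw [pow_succ, mul_assoc]
      _ ≤ 3 ^ n * kakeyaSum ℙ (N * R ^ q) := kakeyaSum_mul_le hn (by positivity) hℙ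
      _ ≤ 3 ^ n * ((3 ^ n) ^ q * kakeyaSum ℙ N) := by gcongr
      _ = (3 ^ n) ^ (q + 1) * kakeyaSum ℙ N := by ring

lemma kakeyaSum_le_pow [∀ j, IsProbabilityMeasure (ℙ j)] (hn : 2 ≤ n) (N : ℕ) :
    kakeyaSum ℙ N ≤ N ^ n :=
  calc kakeyaSum ℙ N ≤ ∑ _k : Fin n → Fin N, 1 := Finset.sum_le_sum fun _ _ =>
        Finset.prod_le_one' fun _ _ => ENNReal.rpow_le_one prob_le_one (one_div_sub_one_nonneg hn)
    _ = N ^ n := by simp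

lemma kakeyaSum_two_pow_le [∀ j, IsProbabilityMeasure (ℙ j)] (hn : 2 ≤ n) {r : ℕ} (hr : 0 < r)
    {ε : ℝ} (hε : 0 ≤ ε) (hrε : (3 : ℝ≥0∞) ^ n ≤ 2 ^ (r * ε))
    (hℙ : ∀ j, ∀ᵐ γ ∂ℙ j, IsAlmostParallel (2 ^ r : ℕ) j γ.im) (m : ℕ) :
    kakeyaSum ℙ (2 ^ m) ≤ 2 ^ (r * n) * 2 ^ (m * ε) := by
  have hm : r * ε * (m / r : ℕ) ≤ m * ε := by
    have : ((m / r : ℕ) : ℝ) * r ≤ m := by exact_mod_cast Nat.div_mul_le_self m r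
    nlinarith
  calc kakeyaSum ℙ (2 ^ m) = kakeyaSum ℙ (2 ^ (m % r) * (2 ^ r) ^ (m / r)) := by
        rw [← pow_mul, ← pow_add, Nat.mod_add_div]
    _ ≤ (3 ^ n) ^ (m / r) * kakeyaSum ℙ (2 ^ (m % r)) :=
        kakeyaSum_mul_pow_le hn (by positivity) (by positivity) hℙ _
    _ ≤ (2 ^ (r * ε)) ^ (m / r) * (2 ^ r) ^ n := by
        gcongr
        refine (kakeyaSum_le_pow hn _).trans ?_
        push_cast
        gcongr
        · exact one_le_two
        · exact (Nat.mod_lt m hr).le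
    _ = 2 ^ (r * n) * 2 ^ (r * ε * (m / r : ℕ)) := by
        rw [← pow_mul, ENNReal.rpow_mul _ (r * ε), ENNReal.rpow_natCast, mul_comm]
    _ ≤ 2 ^ (r * n) * 2 ^ (m * ε) := by
        gcongr
        exact one_le_two

lemma exists_pos_three_pow_le_two_rpow (n : ℕ) {ε : ℝ} (hε : 0 < ε) :
    ∃ r > 0, (3 : ℝ≥0∞) ^ n ≤ 2 ^ ((r : ℕ) * ε) := by
  have h : Tendsto (fun r : ℕ => (r : ℝ) * ε) atTop atTop :=
    tendsto_natCast_atTop_atTop.atTop_mul_const hε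
  obtain ⟨r, hr, hrn⟩ := ((eventually_gt_atTop 0).and (h.eventually_ge_atTop (2 * n))).exists
  refine ⟨r, hr, ?_⟩
  calc (3 : ℝ≥0∞) ^ n ≤ (2 ^ 2) ^ n := by gcongr; norm_num
    _ = 2 ^ (2 * n : ℝ) := by rw [← pow_mul, ← ENNReal.rpow_natCast]; push_cast; rfl
    _ ≤ 2 ^ (r * ε) := by gcongr; exact one_le_two

lemma sq_mul_sq_add_sq_le_of_mem_cone {θ : ℝ} (hθ : 0 ≤ θ) {i j : Fin n} (hij : i ≠ j) {v : E n}
    (hv : v ∈ cone (EuclideanSpace.single j 1) θ) : θ ^ 2 * (v i ^ 2 + v j ^ 2) ≤ v j ^ 2 := by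
  have hvj : θ * ‖v‖ ≤ |v j| := by
    simpa [cone, EuclideanSpace.inner_single_right] using hv
  have hvij : v i ^ 2 + v j ^ 2 ≤ ‖v‖ ^ 2 := by
    rw [EuclideanSpace.real_norm_sq_eq, ← Finset.sum_pair hij (f := fun k => v k ^ 2)]
    exact Finset.sum_le_sum_of_subset_of_nonneg (Finset.subset_univ _) fun _ _ _ => sq_nonneg _
  calc θ ^ 2 * (v i ^ 2 + v j ^ 2) ≤ (θ * ‖v‖) ^ 2 := by rw [mul_pow]; gcongr
    _ ≤ |v j| ^ 2 := by gcongr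
    _ = v j ^ 2 := sq_abs _

lemma IsConeCurve.isAlmostParallel {φ : X → E n} {θ R : ℝ} {j : Fin n} {γ : Fragment X}
    (hγ : IsConeCurve φ (cone (EuclideanSpace.single j 1) θ) γ) (hθ : 0 < θ)
    (hR : R ^ 2 * (1 - θ ^ 2) ≤ θ ^ 2) : IsAlmostParallel R j (φ '' γ.im) := by
  obtain ⟨_, _, h⟩ := hγ
  rintro _ ⟨_, ⟨p, hp, rfl⟩, rfl⟩ _ ⟨_, ⟨q, hq, rfl⟩, rfl⟩ i hij
  set v := φ p.2 - φ q.2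
  have hv := sq_mul_sq_add_sq_le_of_mem_cone hθ.le hij (h p hp q hq).1
  have hsq : θ ^ 2 * (R * |v i|) ^ 2 ≤ θ ^ 2 * |v j| ^ 2 := by
    rw [mul_pow, sq_abs, sq_abs]
    calc θ ^ 2 * (R ^ 2 * v i ^ 2) = R ^ 2 * (θ ^ 2 * v i ^ 2) := by ring
      _ ≤ R ^ 2 * ((1 - θ ^ 2) * v j ^ 2) :=
          mul_le_mul_of_nonneg_left (by linarith) (sq_nonneg R)
      _ = R ^ 2 * (1 - θ ^ 2) * v j ^ 2 := by ring
      _ ≤ θ ^ 2 * v j ^ 2 := by gcongr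
  exact le_of_sq_le_sq (le_of_mul_le_mul_left hsq (by positivity)) (abs_nonneg _)

lemma exists_isAlmostParallel_of_isConeCurve (n : ℕ) (R : ℝ) :
    ∃ δ ∈ Ioo (0 : ℝ) (1 / 4), ∀ (j : Fin n) (γ : Fragment (E n)),
      IsConeCurve id (cone (EuclideanSpace.single j 1) (1 - δ)) γ →
        IsAlmostParallel R j γ.im := by
  have hlim : Tendsto (fun δ : ℝ => R ^ 2 * (1 - (1 - δ) ^ 2) - (1 - δ) ^ 2) (𝓝[>] 0) (𝓝 (-1)) :=
    tendsto_nhdsWithin_of_tendsto_nhds <| Continuous.tendsto' (by fun_prop) _ _ (by norm_num)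
  obtain ⟨δ, hδR, hδ⟩ := ((hlim.eventually_lt_const neg_one_lt_zero).and
    (Ioo_mem_nhdsGT (by norm_num : (0 : ℝ) < 1 / 4))).exists
  refine ⟨δ, hδ, fun j γ hγ => ?_⟩
  simpa using hγ.isAlmostParallel (by linarith [hδ.2]) (sub_neg.1 hδR).le

lemma dyadicCube_subset_closedCube (m : ℕ) (k : Fin n → Fin (2 ^ m)) :
    dyadicCube n m k ⊆ closedCube (2 ^ m) fun i => k i := fun x hx i => by
  push_cast [gridInterval]
  exact ⟨(hx i).1, (hx i).2.le⟩

lemma measure_closedCube_mul_le {μ : Measure (E n)} {ℙ : Measure (Fragment (E n))} {M : ℝ≥0∞}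
    (hμ : μ ≤ M • nu ℙ) (N : ℕ) (k : Fin n → ℕ) :
    μ (closedCube N k) * N ≤ 2 * (n : ℝ≥0∞) ^ (1 / 2 : ℝ) * M * ℙ (hitting (closedCube N k)) := by
  have hN : ENNReal.ofReal (1 / N) * N ≤ 1 := by
    rw [← ENNReal.ofReal_natCast, ← ENNReal.ofReal_mul (by positivity), one_div,
      ENNReal.ofReal_le_one]
    exact inv_mul_le_one
  calc μ (closedCube N k) * N
      ≤ M * (2 * ((n : ℝ≥0∞) ^ (1 / 2 : ℝ) * ENNReal.ofReal (1 / N)) *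
          ℙ (hitting (closedCube N k))) * N := by
        gcongr
        refine (hμ _).trans (mul_le_mul_right ?_ M)
        refine (nu_apply_le ℙ (isClosed_closedCube N k).measurableSet).trans ?_
        gcongr
        exact ediam_closedCube_le N k
    _ = 2 * (n : ℝ≥0∞) ^ (1 / 2 : ℝ) * M * ℙ (hitting (closedCube N k)) *
          (ENNReal.ofReal (1 / N) * N) := by ring
    _ ≤ 2 * (n : ℝ≥0∞) ^ (1 / 2 : ℝ) * M * ℙ (hitting (closedCube N k)) :=
        mul_le_of_le_one_right' hN

lemma sum_measure_dyadicCube_rpow_le (hn : 2 ≤ n) {μ : Measure (E n)} {M : Fin n → ℝ≥0∞}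
    (hμ : ∀ j, μ ≤ M j • nu (ℙ j)) (m : ℕ) :
    ∑ k, (μ (dyadicCube n m k) * 2 ^ m) ^ ((n : ℝ) / (n - 1)) ≤
      (2 * (n : ℝ≥0∞) ^ (1 / 2 : ℝ)) ^ ((n : ℝ) / (n - 1)) * (∏ j, M j ^ (1 / ((n : ℝ) - 1))) *
        kakeyaSum ℙ (2 ^ m) := by
  have hp := one_div_sub_one_nonneg hn
  have hprod (y : ℝ≥0∞) : y ^ ((n : ℝ) / (n - 1)) = ∏ _j : Fin n, y ^ (1 / ((n : ℝ) - 1)) := by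
    rw [Finset.prod_const, Finset.card_fin, ← ENNReal.rpow_mul_natCast, one_div_mul_eq_div]
  rw [kakeyaSum, Finset.mul_sum]
  gcongr with k _
  simp only [hprod, ← Finset.prod_mul_distrib, ← ENNReal.mul_rpow_of_nonneg _ _ hp]
  refine Finset.prod_le_prod' fun j _ => ENNReal.rpow_le_rpow ?_ hp
  calc μ (dyadicCube n m k) * 2 ^ m
      ≤ μ (closedCube (2 ^ m) fun i => k i) * (2 ^ m : ℕ) := by
        push_cast
        gcongr
        exact dyadicCube_subset_closedCube m k
    _ ≤ _ := measure_closedCube_mul_le (hμ j) _ _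

lemma div_rpow_mul_eq_mul_rpow {x s d : ℝ} (hx : 0 ≤ x) (hs : 0 < s) (hd : d ≠ 1) :
    (x / s ^ (-d)) ^ (d / (d - 1)) * s ^ (-d) = (x * s) ^ (d / (d - 1)) := by
  have hexp : d * (d / (d - 1)) + -d = d / (d - 1) := by
    have := sub_ne_zero.2 hd
    field_simp
    ring
  rw [Real.rpow_neg hs.le, div_inv_eq_mul, ← Real.rpow_neg hs.le,
    Real.mul_rpow hx (by positivity), Real.mul_rpow hx hs.le, ← Real.rpow_mul hs.le, mul_assoc,
    ← Real.rpow_add hs, hexp]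

lemma toReal_div_rpow_mul_eq (hn : 2 ≤ n) (a : ℝ≥0∞) (m : ℕ) :
    (a.toReal / (2 : ℝ) ^ (-(m : ℝ) * n)) ^ ((n : ℝ) / (n - 1)) * (2 : ℝ) ^ (-(m : ℝ) * n) =
      ((a * 2 ^ m) ^ ((n : ℝ) / (n - 1))).toReal := by
  have hn1 : (n : ℝ) ≠ 1 := by norm_cast; lia
  have hside : (2 : ℝ) ^ (-(m : ℝ) * n) = (2 ^ m) ^ (-(n : ℝ)) := by
    rw [← Real.rpow_natCast, ← Real.rpow_mul zero_le_two, neg_mul_comm]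
  rw [hside, div_rpow_mul_eq_mul_rpow ENNReal.toReal_nonneg (by positivity) hn1,
    ← ENNReal.toReal_rpow, ENNReal.toReal_mul, ENNReal.toReal_pow, ENNReal.toReal_ofNat]

lemma sum_toReal_le_toReal {ι : Type*} [Fintype ι] {f : ι → ℝ≥0∞} {b : ℝ≥0∞} (hb : b ≠ ⊤)
    (h : ∑ i, f i ≤ b) : ∑ i, (f i).toReal ≤ b.toReal := by
  rw [← ENNReal.toReal_sum (ENNReal.sum_ne_top.1 (ne_top_of_le_ne_top hb h))]
  exact ENNReal.toReal_mono hb h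

/-- Multilinear Kakeya estimate for measures dominated by `ν(ℙⱼ)` with
`ℙⱼ` concentrated on `C(eⱼ, 1-δ)`-curves: for every `ε > 0` there is `δ ∈ (0,1/4)` and a
constant `K(n,ε)` such that
`∑_{Q ∈ 𝒟_m} (μ(Q)/|Q|)^{n/(n-1)} |Q| ≤ K(n,ε) 2^{mε} ∏ⱼ Mⱼ^{1/(n-1)}` for all `m`. -/
theorem multilinear_kakeya_estimate (n : ℕ) (hn : 2 ≤ n) (ε : ℝ) (hε : 0 < ε) :
    ∃ δ : ℝ, δ ∈ Set.Ioo (0:ℝ) (1/4) ∧ ∃ Kc : ℝ, 0 < Kc ∧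
      ∀ (μ : Measure (E n)) (M : Fin n → ℝ), (∀ j, 0 < M j) →
        ∀ ℙ : Fin n → Measure (Fragment (E n)),
          (∀ j, IsProbabilityMeasure (ℙ j)) →
          (∀ j, (ℙ j) {γ : Fragment (E n) |
            ¬ IsConeCurve (id : E n → E n) (cone (EuclideanSpace.single j 1) (1 - δ)) γ} = 0) →
          (∀ j, μ ≤ ENNReal.ofReal (M j) • nu (ℙ j)) →
          ∀ m : ℕ,
            ∑ k : Fin n → Fin (2 ^ m),
              ((μ (dyadicCube n m k)).toReal / (2:ℝ) ^ (-(m : ℝ) * n)) ^ ((n : ℝ) / (n - 1))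
                * (2:ℝ) ^ (-(m : ℝ) * n)
            ≤ Kc * 2 ^ ((m : ℝ) * ε) * ∏ j, (M j) ^ (1 / ((n : ℝ) - 1)) := by
  obtain ⟨r, hr, hrε⟩ := exists_pos_three_pow_le_two_rpow n hε
  obtain ⟨δ, hδ, hparallel⟩ := exists_isAlmostParallel_of_isConeCurve n (2 ^ r : ℕ)
  refine ⟨δ, hδ, (2 * (n : ℝ) ^ (1 / 2 : ℝ)) ^ ((n : ℝ) / (n - 1)) * 2 ^ (r * n), by positivity,
    fun μ M hM ℙ hℙ hcone hμ m => ?_⟩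
  have hsum := kakeyaSum_two_pow_le hn hr hε.le hrε
    (fun j => Eventually.mono (hcone j) (hparallel j)) m
  have hbound := (sum_measure_dyadicCube_rpow_le hn hμ m).trans (mul_le_mul_right hsum _)
  have hp := one_div_sub_one_nonneg hn
  have hq : 0 ≤ (n : ℝ) / (n - 1) := div_nonneg n.cast_nonneg (one_div_nonneg.1 hp)
  have hprod : ∏ j, ENNReal.ofReal (M j) ^ (1 / ((n : ℝ) - 1)) ≠ ⊤ :=
    ENNReal.prod_ne_top fun _ _ => by finiteness
  simp only [toReal_div_rpow_mul_eq hn]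
  refine (sum_toReal_le_toReal (by finiteness) hbound).trans_eq ?_
  simp only [toReal_mul, toReal_prod, toReal_pow, ← toReal_rpow, toReal_ofNat, toReal_natCast,
    toReal_ofReal (hM _).le]
  ring

end BKO
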